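/- Let β₁, β₂ be real numbers with β₁ > 0, β₂ < 1 and β₁ + β₂ > 1/2, and let z be a real number with 0 < z < 1, and set u = (1+z)²/(4z) (so u > 1). Then ∫₀^z x^{β₁+β₂−3/2} (x² + 2(1−2u)x + 1)^{−β₂} dx = Γ(β₁+β₂−1/2) Γ(1−β₂) / Γ(β₁+1/2) · (4u)^{−(β₁+β₂−1/2)} · ₂F₁(β₁+β₂−1/2, β₁; 2β₁; 1/u). (Note x² + 2(1−2u)x + 1 = (z−x)(1/z−x) > 0 for 0 < x < z, so the integrand is well defined, and 0 < 1/u < 1.) -/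

import Mathlib

open MeasureTheory

/-- Pochhammer symbol `(x)_n` in `ℝ`. -/
noncomputable def rpoch (x : ℝ) (n : ℕ) : ℝ := (ascPochhammer ℝ n).eval x

/-- Gauss' hypergeometric series `₂F₁` (real). -/
noncomputable def hyp2F1 (a b c z : ℝ) : ℝ :=
  ∑' n : ℕ, rpoch a n * rpoch b n / (rpoch c n * (n.factorial : ℝ)) * z ^ n

open Filter Topology in
lemma aux_summable (a : ℕ → ℝ) (ha : ∀ n, 0 < a n)
    (hr : Tendsto (fun n => a (n + 1) / a n) atTop (𝓝 1)) (w : ℝ) (hw : |w| < 1) :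
    Summable (fun n => a n * w ^ n) := by
  rcases eq_or_ne w 0 with rfl | h0
  · refine summable_of_ne_finset_zero (s := {0}) ?_
    intro n hn
    simp at hn
    simp [hn]
  · refine summable_of_ratio_test_tendsto_lt_one (l := 1 * |w|) (by linarith) ?_ ?_
    · exact Eventually.of_forall fun n => mul_ne_zero (ha n).ne' (pow_ne_zero _ h0)
    · refine (hr.mul_const |w|).congr fun n => ?_
      have h1 := (ha n).ne'
      have h2 : |w| ≠ 0 := abs_ne_zero.2 h0
      rw [norm_mul, norm_mul, norm_pow, norm_pow, Real.norm_eq_abs, Real.norm_eq_abs,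
        Real.norm_eq_abs, abs_of_pos (ha n), abs_of_pos (ha (n + 1)), pow_succ]
      field_simp

open Filter Topology in
lemma aux_ratio (a : ℕ → ℝ) (ha : ∀ n, 0 < a n)
    (hr : Tendsto (fun n => a (n + 1) / a n) atTop (𝓝 1)) :
    Tendsto (fun n : ℕ => (((n + 1 : ℕ) : ℝ) + 1) * a (n + 1 + 1) / (((n : ℝ) + 1) * a (n + 1)))
      atTop (𝓝 1) := by
  have h1 : Tendsto (fun n : ℕ => 1 + 1 / ((n : ℝ) + 1)) atTop (𝓝 (1 + 0)) :=
    tendsto_const_nhds.add tendsto_one_div_add_atTop_nhds_zero_nat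
  have h2 := h1.mul (hr.comp (tendsto_add_atTop_nat 1))
  simp only [add_zero, mul_one] at h2
  refine h2.congr fun n => ?_
  have h3 := (ha (n + 1)).ne'
  have h4 : (n : ℝ) + 1 ≠ 0 := by positivity
  simp only [Function.comp]
  push_cast
  field_simp

open Filter Topology in
lemma aux_deriv (a : ℕ → ℝ) (ha : ∀ n, 0 < a n)
    (hr : Tendsto (fun n => a (n + 1) / a n) atTop (𝓝 1)) (w : ℝ) (hw : |w| < 1) :
    HasDerivAt (fun w => ∑' n, a n * w ^ n) (∑' n : ℕ, ((n : ℝ) + 1) * a (n + 1) * w ^ n) w := by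
  obtain ⟨r, hr1, hr2⟩ := exists_between hw
  have hr0 : 0 < r := (abs_nonneg w).trans_lt hr1
  have hs : ∀ v : ℝ, |v| < 1 → Summable (fun n : ℕ => ((n : ℝ) + 1) * a (n + 1) * v ^ n) := by
    intro v hv
    exact aux_summable (fun n : ℕ => ((n : ℝ) + 1) * a (n + 1))
      (fun n => mul_pos (by positivity) (ha _)) (aux_ratio a ha hr) v hv
  have hs' : ∀ v : ℝ, |v| < 1 → Summable (fun n : ℕ => (n : ℝ) * a n * v ^ (n - 1)) := by
    intro v hv
    rw [← summable_nat_add_iff 1]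
    simpa using hs v hv
  have key := hasDerivAt_tsum_of_isPreconnected (𝕜 := ℝ) (g := fun (n : ℕ) (w : ℝ) => a n * w ^ n)
    (g' := fun (n : ℕ) (w : ℝ) => (n : ℝ) * a n * w ^ (n - 1)) (u := fun n : ℕ => (n : ℝ) * a n * r ^ (n - 1))
    (t := Metric.ball 0 r) (y₀ := 0) (y := w) (hs' r (by rwa [abs_of_pos hr0])) Metric.isOpen_ball
    (convex_ball _ _).isPreconnected ?_ ?_ (by simpa using hr0) ?_ (by simpa using hr1)
  · refine key.congr_deriv ?_
    rw [(hs' w hw).tsum_eq_zero_add]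
    simp
  · intro n y _
    refine ((hasDerivAt_pow n y).const_mul (a n)).congr_deriv ?_
    ring
  · intro n y hy
    have hy' : |y| ≤ r := by simpa using (mem_ball_zero_iff.1 hy).le
    rw [norm_mul, norm_mul, norm_pow, Real.norm_eq_abs, Real.norm_eq_abs,
        Real.norm_eq_abs, abs_of_pos (ha n), Nat.abs_cast]
    have := (ha n).le
    gcongr
  · exact aux_summable a ha hr 0 (by simp)

/-- coefficients -/
noncomputable def gco (b : ℝ) (n : ℕ) : ℝ :=
  rpoch b n * rpoch (b + 1 / 2) n / (rpoch (2 * b) n * (n.factorial : ℝ))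

lemma rpoch_pos {x : ℝ} (hx : 0 < x) (n : ℕ) : 0 < rpoch x n := ascPochhammer_pos n x hx

lemma rpoch_succ (x : ℝ) (n : ℕ) : rpoch x (n + 1) = rpoch x n * (x + n) := by
  unfold rpoch; rw [ascPochhammer_succ_eval]

lemma gco_pos {b : ℝ} (hb : 0 < b) (n : ℕ) : 0 < gco b n := by
  unfold gco
  have := rpoch_pos hb n
  have := rpoch_pos (show 0 < b + 1 / 2 by linarith) n
  have := rpoch_pos (show 0 < 2 * b by linarith) n
  positivity

lemma gco_rec {b : ℝ} (hb : 0 < b) (n : ℕ) :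
    (2 * b + n) * (n + 1) * gco b (n + 1) = (b + n) * (b + 1 / 2 + n) * gco b n := by
  unfold gco
  have h1 := (rpoch_pos hb n).ne'
  have h2 := (rpoch_pos (show 0 < b + 1 / 2 by linarith) n).ne'
  have h3 := (rpoch_pos (show 0 < 2 * b by linarith) n).ne'
  have h4 : (n.factorial : ℝ) ≠ 0 := by positivity
  have h5 : (n : ℝ) + 1 ≠ 0 := by positivity
  have h6 : 2 * b + n ≠ 0 := by positivity
  rw [rpoch_succ, rpoch_succ, rpoch_succ, Nat.factorial_succ]
  push_cast
  field_simp

open Filter Topology in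
lemma gco_ratio {b : ℝ} (hb : 0 < b) :
    Tendsto (fun n => gco b (n + 1) / gco b n) atTop (𝓝 1) := by
  have hc : ∀ c : ℝ, Tendsto (fun n : ℕ => 1 + c * (1 / ((n : ℝ) + 1))) atTop (𝓝 (1 + c * 0)) :=
    fun c => tendsto_const_nhds.add (tendsto_one_div_add_atTop_nhds_zero_nat.const_mul c)
  have h := ((hc (b - 1)).mul (hc (b - 1 / 2))).div (hc (2 * b - 1)) (by simp)
  have e : (1 + (b - 1) * 0) * (1 + (b - 1 / 2) * 0) / (1 + (2 * b - 1) * 0) = 1 := by norm_num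
  rw [e] at h
  refine h.congr fun n => ?_
  have h0 := (gco_pos hb n).ne'
  have h5 : (n : ℝ) + 1 ≠ 0 := by positivity
  have h6 : 2 * b + n ≠ 0 := by positivity
  have h7 : 1 + (2 * b - 1) * (1 / ((n : ℝ) + 1)) = (2 * b + n) / (n + 1) := by
    field_simp; ring
  have h8 : 1 + (b - 1) * (1 / ((n : ℝ) + 1)) = (b + n) / (n + 1) := by
    field_simp; ring
  have h9 : 1 + (b - 1 / 2) * (1 / ((n : ℝ) + 1)) = (b + 1 / 2 + n) / (n + 1) := by
    field_simp; ring
  simp only [Pi.div_apply]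
  rw [h7, h8, h9, eq_div_iff h0, div_mul_div_comm, div_div_div_eq, div_mul_eq_mul_div,
    div_eq_iff (by positivity)]
  have := gco_rec hb n
  linear_combination (-(n + 1 : ℝ)) * this

noncomputable def S0 (b w : ℝ) : ℝ := ∑' n, gco b n * w ^ n
noncomputable def S1 (b w : ℝ) : ℝ := ∑' n : ℕ, ((n : ℝ) + 1) * gco b (n + 1) * w ^ n
noncomputable def S2 (b w : ℝ) : ℝ :=
  ∑' n : ℕ, ((n : ℝ) + 1) * ((((n + 1 : ℕ) : ℝ) + 1) * gco b (n + 1 + 1)) * w ^ n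

lemma S0_deriv {b : ℝ} (hb : 0 < b) {w : ℝ} (hw : |w| < 1) : HasDerivAt (S0 b) (S1 b w) w :=
  aux_deriv _ (gco_pos hb) (gco_ratio hb) w hw

lemma S1_deriv {b : ℝ} (hb : 0 < b) {w : ℝ} (hw : |w| < 1) : HasDerivAt (S1 b) (S2 b w) w :=
  aux_deriv (fun n : ℕ => ((n : ℝ) + 1) * gco b (n + 1))
      (fun n => mul_pos (by positivity) (gco_pos hb _)) (aux_ratio _ (gco_pos hb) (gco_ratio hb)) w hw

lemma S_ode {b : ℝ} (hb : 0 < b) {w : ℝ} (hw : |w| < 1) :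
    w * (1 - w) * S2 b w + (2 * b - (2 * b + 3 / 2) * w) * S1 b w - b * (b + 1 / 2) * S0 b w = 0 := by
  have p1 : ∀ n : ℕ, 0 < ((n : ℝ) + 1) * gco b (n + 1) :=
    fun n => mul_pos (by positivity) (gco_pos hb _)
  have r1 := aux_ratio _ (gco_pos hb) (gco_ratio hb)
  have s0 : HasSum (fun n => gco b n * w ^ n) (S0 b w) :=
    (aux_summable _ (gco_pos hb) (gco_ratio hb) w hw).hasSum
  have s1 : HasSum (fun n : ℕ => ((n : ℝ) + 1) * gco b (n + 1) * w ^ n) (S1 b w) :=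
    (aux_summable (fun n : ℕ => ((n : ℝ) + 1) * gco b (n + 1)) p1 r1 w hw).hasSum
  have s2 : HasSum (fun n : ℕ => ((n : ℝ) + 1) * ((((n + 1 : ℕ) : ℝ) + 1) * gco b (n + 1 + 1)) * w ^ n)
      (S2 b w) :=
    (aux_summable (fun n : ℕ => ((n : ℝ) + 1) * ((((n + 1 : ℕ) : ℝ) + 1) * gco b (n + 1 + 1)))
      (fun n => mul_pos (by positivity) (p1 _)) (aux_ratio _ p1 r1) w hw).hasSum
  -- shifted versions
  have t1 : HasSum (fun n : ℕ => (n : ℝ) * gco b n * w ^ n) (w * S1 b w) := by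
    rw [← hasSum_nat_add_iff' 1]
    simp only [Finset.sum_range_one, Nat.cast_zero, zero_mul, sub_zero]
    refine (s1.mul_left w).congr_fun ?_
    intro n; push_cast; ring
  have t2 : HasSum (fun n : ℕ => (n : ℝ) * (((n : ℝ) + 1) * gco b (n + 1)) * w ^ n) (w * S2 b w) := by
    rw [← hasSum_nat_add_iff' 1]
    simp only [Finset.sum_range_one, Nat.cast_zero, zero_mul, sub_zero]
    refine (s2.mul_left w).congr_fun ?_
    intro n; push_cast; ring
  have t3 : HasSum (fun n : ℕ => (n : ℝ) * ((n : ℝ) - 1) * gco b n * w ^ n) (w * (w * S2 b w)) := by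
    rw [← hasSum_nat_add_iff' 1]
    simp only [Finset.sum_range_one, Nat.cast_zero, zero_mul, sub_zero]
    refine (t2.mul_left w).congr_fun ?_
    intro n; push_cast; ring
  have tot := (((t2.sub t3).add (s1.mul_left (2 * b))).sub (t1.mul_left (2 * b + 3 / 2))).sub
    (s0.mul_left (b * (b + 1 / 2)))
  have z : HasSum (fun _ : ℕ => (0 : ℝ)) 0 := hasSum_zero
  have := tot.unique (z.congr_fun fun n => ?_)
  · linear_combination this
  · have := gco_rec hb n
    linear_combination w ^ n * this
lemma wx_lt {x : ℝ} (hx : -(1 / 10) < x) (hx1 : x < 1) : |4 * x / (1 + x) ^ 2| < 1 := by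
  have h : 0 < (1 + x) ^ 2 := by have : 0 < 1 + x := by linarith
                                 positivity
  rw [abs_lt, lt_div_iff₀ h, div_lt_iff₀ h]
  constructor <;> nlinarith [mul_pos (sub_pos.2 hx1) (sub_pos.2 hx1)]

lemma wx_deriv {x : ℝ} (hx : 0 < 1 + x) :
    HasDerivAt (fun x : ℝ => 4 * x / (1 + x) ^ 2) (4 * (1 - x) / (1 + x) ^ 3) x := by
  have h1 : HasDerivAt (fun x : ℝ => 1 + x) 1 x := (hasDerivAt_id x).const_add 1
  have h2 : HasDerivAt (fun x : ℝ => 4 * x) 4 x := by simpa using (hasDerivAt_id x).const_mul 4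
  refine (h2.div (h1.pow 2) (by simpa using hx.ne')).congr_deriv ?_
  have := hx.ne'
  simp only [Pi.pow_apply]
  field_simp
  ring

lemma q_deriv (b : ℝ) {x : ℝ} (hx : 0 < 1 + x) :
    HasDerivAt (fun x : ℝ => (1 + x) ^ (-2 * b)) (-2 * b / (1 + x) * (1 + x) ^ (-2 * b)) x := by
  have h1 : HasDerivAt (fun x : ℝ => 1 + x) 1 x := (hasDerivAt_id x).const_add 1
  refine (h1.rpow_const (p := -2 * b) (Or.inl hx.ne')).congr_deriv ?_
  rw [Real.rpow_sub_one hx.ne']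
  ring

noncomputable def h0 (b x : ℝ) : ℝ := (1 + x) ^ (-2 * b) * ((1 - x) * S0 b (4 * x / (1 + x) ^ 2))
noncomputable def e1 (b x : ℝ) : ℝ :=
  4 * (1 - x) ^ 2 / (1 + x) ^ 3 * S1 b (4 * x / (1 + x) ^ 2)
    - (1 + 2 * b * (1 - x) / (1 + x)) * S0 b (4 * x / (1 + x) ^ 2)
noncomputable def e2 (b x : ℝ) : ℝ :=
  4 * (1 - x) ^ 2 / (1 + x) ^ 3 * (S2 b (4 * x / (1 + x) ^ 2) * (4 * (1 - x) / (1 + x) ^ 3))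
   + (-8 * (1 - x) / (1 + x) ^ 3 - 12 * (1 - x) ^ 2 / (1 + x) ^ 4) * S1 b (4 * x / (1 + x) ^ 2)
    - ((1 + 2 * b * (1 - x) / (1 + x)) * (S1 b (4 * x / (1 + x) ^ 2) * (4 * (1 - x) / (1 + x) ^ 3))
      - 4 * b / (1 + x) ^ 2 * S0 b (4 * x / (1 + x) ^ 2))
noncomputable def h1 (b x : ℝ) : ℝ := (1 + x) ^ (-2 * b) * e1 b x

lemma h0_deriv {b : ℝ} (hb : 0 < b) {x : ℝ} (hx : -(1 / 10) < x) (hx1 : x < 1) :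
    HasDerivAt (h0 b) (h1 b x) x := by
  have hp : 0 < 1 + x := by linarith
  have hw := wx_lt hx hx1
  have d0 : HasDerivAt (fun x => S0 b (4 * x / (1 + x) ^ 2))
      (S1 b (4 * x / (1 + x) ^ 2) * (4 * (1 - x) / (1 + x) ^ 3)) x :=
    HasDerivAt.comp (h₂ := S0 b) x (S0_deriv hb hw) (wx_deriv hp)
  have d1 : HasDerivAt (fun x : ℝ => 1 - x) (-1) x := (hasDerivAt_id x).const_sub 1
  refine ((q_deriv b hp).mul (d1.mul d0)).congr_deriv ?_
  have := hp.ne'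
  simp only [h1, e1, Pi.mul_apply]
  field_simp
  ring

lemma e1_deriv {b : ℝ} (hb : 0 < b) {x : ℝ} (hx : -(1 / 10) < x) (hx1 : x < 1) :
    HasDerivAt (e1 b) (e2 b x) x := by
  have hp : 0 < 1 + x := by linarith
  have hw := wx_lt hx hx1
  have d0 : HasDerivAt (fun x => S0 b (4 * x / (1 + x) ^ 2))
      (S1 b (4 * x / (1 + x) ^ 2) * (4 * (1 - x) / (1 + x) ^ 3)) x :=
    HasDerivAt.comp (h₂ := S0 b) x (S0_deriv hb hw) (wx_deriv hp)
  have d1 : HasDerivAt (fun x => S1 b (4 * x / (1 + x) ^ 2))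
      (S2 b (4 * x / (1 + x) ^ 2) * (4 * (1 - x) / (1 + x) ^ 3)) x :=
    HasDerivAt.comp (h₂ := S1 b) x (S1_deriv hb hw) (wx_deriv hp)
  have m1 : HasDerivAt (fun x : ℝ => 1 - x) (-1) x := (hasDerivAt_id x).const_sub 1
  have p1 : HasDerivAt (fun x : ℝ => 1 + x) 1 x := (hasDerivAt_id x).const_add 1
  have hne := hp.ne'
  have c1 : HasDerivAt (fun x : ℝ => 4 * (1 - x) ^ 2 / (1 + x) ^ 3)
      (-8 * (1 - x) / (1 + x) ^ 3 - 12 * (1 - x) ^ 2 / (1 + x) ^ 4) x := by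
    refine (((m1.pow 2).const_mul 4).div (p1.pow 3) (by simpa using hne)).congr_deriv ?_
    simp only [Pi.pow_apply]
    field_simp
    ring
  have c0 : HasDerivAt (fun x : ℝ => 1 + 2 * b * (1 - x) / (1 + x)) (-(4 * b / (1 + x) ^ 2)) x := by
    refine (((m1.const_mul (2 * b)).div p1 hne).const_add 1).congr_deriv ?_
    field_simp
    ring
  refine ((c1.mul d1).sub (c0.mul d0)).congr_deriv ?_
  simp only [e2]
  ring

lemma e_rel {b : ℝ} (hb : 0 < b) {x : ℝ} (hx : -(1 / 10) < x) (hx1 : x < 1) :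
    x * e2 b x + 2 * b / (1 + x) * e1 b x = 0 := by
  have hp : 0 < 1 + x := by linarith
  have hne := hp.ne'
  have ode := S_ode hb (wx_lt hx hx1)
  unfold e1 e2
  generalize S0 b (4 * x / (1 + x) ^ 2) = A at *
  generalize S1 b (4 * x / (1 + x) ^ 2) = B at *
  generalize S2 b (4 * x / (1 + x) ^ 2) = C at *
  field_simp at ode ⊢
  linear_combination (2 * (1 - x)) * ode

lemma W_deriv {b : ℝ} (hb : 0 < b) {x : ℝ} (hx : 0 < x) (hx1 : x < 1) :
    HasDerivAt (fun x => x ^ (2 * b) * h1 b x) 0 x := by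
  have hp : 0 < 1 + x := by linarith
  have d : HasDerivAt (fun x : ℝ => x ^ (2 * b)) (2 * b / x * x ^ (2 * b)) x := by
    refine ((hasDerivAt_id x).rpow_const (p := 2 * b) (Or.inl hx.ne')).congr_deriv ?_
    simp only [id]
    rw [Real.rpow_sub_one hx.ne']
    ring
  refine (d.mul ((q_deriv b hp).mul (e1_deriv hb (by linarith) hx1))).congr_deriv ?_
  have r := e_rel hb (show -(1 / 10) < x by linarith) hx1
  have := hp.ne'
  have := hx.ne'
  simp only [Pi.mul_apply]
  have e : e2 b x = - (2 * b / (1 + x) * e1 b x) / x := by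
    rw [eq_div_iff hx.ne']; linarith
  rw [e]
  field_simp
  ring

lemma h1_zero {b : ℝ} (hb : 0 < b) {x : ℝ} (hx : 0 < x) (hx1 : x < 1) : h1 b x = 0 := by
  have hc : ContinuousOn (fun x => x ^ (2 * b) * h1 b x) (Set.Icc 0 x) := by
    intro y hy
    refine ContinuousAt.continuousWithinAt ?_
    have hy1 : y < 1 := hy.2.trans_lt hx1
    have hy0 : -(1 / 10) < y := by linarith [hy.1]
    exact (Real.continuousAt_rpow_const _ _ (Or.inr (by linarith))).mul
      (((q_deriv b (by linarith)).mul (e1_deriv hb hy0 hy1)).continuousAt)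
  obtain ⟨c, hc1, hc2⟩ := exists_hasDerivAt_eq_slope _ (fun _ => 0) hx hc
    (fun y hy => W_deriv hb hy.1 (hy.2.trans hx1))
  rw [eq_div_iff (by linarith), Real.zero_rpow (by linarith)] at hc2
  have := Real.rpow_pos_of_pos hx (2 * b)
  have h : x ^ (2 * b) * h1 b x = 0 := by linarith
  exact (mul_eq_zero.1 h).resolve_left this.ne'

lemma S0_zero (b : ℝ) : S0 b 0 = 1 := by
  unfold S0
  rw [tsum_eq_single 0]
  · simp [gco, rpoch]
  · intro n hn; simp [hn]

lemma S0_eval {b : ℝ} (hb : 0 < b) {x : ℝ} (hx : 0 < x) (hx1 : x < 1) :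
    S0 b (4 * x / (1 + x) ^ 2) = (1 + x) ^ (2 * b) / (1 - x) := by
  have hc : ContinuousOn (h0 b) (Set.Icc 0 x) := fun y hy =>
    (h0_deriv hb (by linarith [hy.1]) (hy.2.trans_lt hx1)).continuousAt.continuousWithinAt
  obtain ⟨c, hc1, hc2⟩ := exists_hasDerivAt_eq_slope _ _ hx hc
    (fun y hy => h0_deriv hb (by linarith [hy.1]) (hy.2.trans hx1))
  rw [h1_zero hb hc1.1 (hc1.2.trans hx1), eq_div_iff (by linarith)] at hc2
  have e : h0 b x = 1 := by
    have : h0 b 0 = 1 := by simp [h0, S0_zero]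
    linarith
  unfold h0 at e
  have hp : 0 < 1 + x := by linarith
  have := Real.rpow_pos_of_pos hp (2 * b)
  rw [eq_div_iff (by linarith)]
  rw [neg_mul, Real.rpow_neg hp.le] at e
  generalize S0 b (4 * x / (1 + x) ^ 2) = A at *
  field_simp at e
  linarith
lemma beta_aux {α β : ℝ} (hα : 0 < α) (hβ : 0 < β) :
    IntegrableOn (fun x : ℝ => x ^ (α - 1) * (1 - x) ^ (β - 1)) (Set.Ioo 0 1) ∧
    ∫ x in Set.Ioo (0 : ℝ) 1, x ^ (α - 1) * (1 - x) ^ (β - 1) =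
      Real.Gamma α * Real.Gamma β / Real.Gamma (α + β) := by
  have hc := Complex.betaIntegral_convergent (u := α) (v := β) (by simpa) (by simpa)
  rw [intervalIntegrable_iff_integrableOn_Ioo_of_le zero_le_one] at hc
  have he : Set.EqOn (fun x : ℝ => (x : ℂ) ^ ((α : ℂ) - 1) * (1 - (x : ℂ)) ^ ((β : ℂ) - 1))
      (fun x : ℝ => ((x ^ (α - 1) * (1 - x) ^ (β - 1) : ℝ) : ℂ)) (Set.Ioo 0 1) := by
    intro x hx
    have h1 : (0 : ℝ) ≤ 1 - x := by linarith [hx.2]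
    simp only
    rw [Complex.ofReal_mul, Complex.ofReal_cpow hx.1.le, Complex.ofReal_cpow h1]
    push_cast
    rfl
  constructor
  · have := (hc.congr_fun he measurableSet_Ioo).re
    simpa [IntegrableOn] using this
  · have h := ProbabilityTheory.beta_eq_betaIntegralReal α β hα hβ
    rw [Complex.betaIntegral, intervalIntegral.integral_of_le zero_le_one,
      integral_Ioc_eq_integral_Ioo, setIntegral_congr_fun measurableSet_Ioo he,
      integral_complex_ofReal, Complex.ofReal_re] at h
    rw [← h]
    rfl

lemma Gamma_rpoch {x : ℝ} (hx : 0 < x) (n : ℕ) :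
    Real.Gamma (x + n) = rpoch x n * Real.Gamma x := by
  induction n with
  | zero => simp [rpoch]
  | succ n ih =>
    rw [rpoch_succ]
    push_cast
    rw [← add_assoc, Real.Gamma_add_one (by positivity), ih]
    ring

lemma J_eval {a b c u : ℝ} (ha : 0 < a) (hb : 0 < b) (hc : 0 < c) (habc : a + c = b + 1 / 2)
    (hu : 1 < u) :
    ∫ s in Set.Ioo (0 : ℝ) 1, s ^ (a - 1) * (1 - s) ^ (c - 1) * S0 b (s / u) =
      Real.Gamma a * Real.Gamma c / Real.Gamma (b + 1 / 2) * hyp2F1 a b (2 * b) (1 / u) := by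
  have hu0 : 0 < u := by linarith
  have hiu : |1 / u| < 1 := by
    rw [abs_of_pos (by positivity), div_lt_one hu0]; exact hu
  set F : ℕ → ℝ → ℝ := fun n s => gco b n * (1 / u) ^ n * (s ^ (a + n - 1) * (1 - s) ^ (c - 1))
    with hF
  have hFi : ∀ n, Integrable (F n) (volume.restrict (Set.Ioo 0 1)) := fun n =>
    (beta_aux (show 0 < a + n by positivity) hc).1.const_mul _
  have hFv : ∀ n, ∫ s in Set.Ioo (0 : ℝ) 1, F n s = gco b n * (1 / u) ^ n *
      (Real.Gamma (a + n) * Real.Gamma c / Real.Gamma (a + n + c)) := fun n => by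
    simp only [hF]
    rw [integral_const_mul, (beta_aux (show 0 < a + n by positivity) hc).2]
  have hFnn : ∀ n, ∀ s ∈ Set.Ioo (0 : ℝ) 1, 0 ≤ F n s := by
    intro n s hs
    have h1 := (gco_pos hb n).le
    have h2 := Real.rpow_nonneg hs.1.le (a + n - 1)
    have h3 := Real.rpow_nonneg (show 0 ≤ 1 - s by linarith [hs.2]) (c - 1)
    simp only [hF]
    positivity
  have hFn : ∀ n, ∫ s in Set.Ioo (0 : ℝ) 1, ‖F n s‖ = ∫ s in Set.Ioo (0 : ℝ) 1, F n s := fun n =>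
    setIntegral_congr_fun measurableSet_Ioo fun s hs => by
      rw [Real.norm_of_nonneg (hFnn n s hs)]
  have hsum : Summable fun n => ∫ s in Set.Ioo (0 : ℝ) 1, ‖F n s‖ := by
    have hs := (aux_summable _ (gco_pos hb) (gco_ratio hb) (1 / u) hiu).mul_right
      (∫ s in Set.Ioo (0 : ℝ) 1, s ^ (a - 1) * (1 - s) ^ (c - 1))
    refine Summable.of_nonneg_of_le (fun n => integral_nonneg fun s => norm_nonneg _) (fun n => ?_) hs
    rw [hFn, ← integral_const_mul]
    refine setIntegral_mono_on (hFi n) ((beta_aux ha hc).1.const_mul _) measurableSet_Ioo ?_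
    intro s hs
    have h1 := (gco_pos hb n).le
    have h3 := Real.rpow_nonneg (show 0 ≤ 1 - s by linarith [hs.2]) (c - 1)
    have h4 : s ^ (a + n - 1) ≤ s ^ (a - 1) :=
      Real.rpow_le_rpow_of_exponent_ge hs.1 hs.2.le (by linarith [(Nat.cast_nonneg n : (0 : ℝ) ≤ n)])
    simp only [hF]
    gcongr
  have key := (hasSum_integral_of_summable_integral_norm hFi hsum).tsum_eq
  have e1 : ∫ s in Set.Ioo (0 : ℝ) 1, ∑' n, F n s =
      ∫ s in Set.Ioo (0 : ℝ) 1, s ^ (a - 1) * (1 - s) ^ (c - 1) * S0 b (s / u) := by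
    refine setIntegral_congr_fun measurableSet_Ioo fun s hs => ?_
    simp only [S0, hF]
    rw [← tsum_mul_left]
    refine tsum_congr fun n => ?_
    rw [show a + n - 1 = a - 1 + n by ring, Real.rpow_add_natCast hs.1.ne', div_eq_mul_one_div s u,
      mul_pow]
    ring
  rw [← e1, ← key, hyp2F1, ← tsum_mul_left]
  refine tsum_congr fun n => ?_
  rw [hFv, show a + n + c = b + 1 / 2 + n by linarith, Gamma_rpoch ha,
    Gamma_rpoch (show 0 < b + 1 / 2 by linarith), gco]
  have h1 := (rpoch_pos (show 0 < b + 1 / 2 by linarith) n).ne'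
  have h2 := (rpoch_pos (show 0 < 2 * b by linarith) n).ne'
  have h3 := (Real.Gamma_pos_of_pos (show 0 < b + 1 / 2 by linarith)).ne'
  have h4 : (n.factorial : ℝ) ≠ 0 := by positivity
  generalize rpoch (b + 1 / 2) n = A at *
  generalize rpoch (2 * b) n = B at *
  generalize Real.Gamma (b + 1 / 2) = C at *
  field_simp

lemma subst_image {z u : ℝ} (hz0 : 0 < z) (hz1 : z < 1) (hu : u = (1 + z) ^ 2 / (4 * z)) :
    (fun x : ℝ => u * (4 * x / (1 + x) ^ 2)) '' Set.Ioo 0 z = Set.Ioo 0 1 ∧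
    Set.InjOn (fun x : ℝ => u * (4 * x / (1 + x) ^ 2)) (Set.Ioo 0 z) := by
  have hu0 : 0 < u := by rw [hu]; positivity
  have hd : ∀ x : ℝ, 0 ≤ x → HasDerivAt (fun x : ℝ => u * (4 * x / (1 + x) ^ 2))
      (u * (4 * (1 - x) / (1 + x) ^ 3)) x := fun x hx => (wx_deriv (by linarith)).const_mul u
  have hcont : ContinuousOn (fun x : ℝ => u * (4 * x / (1 + x) ^ 2)) (Set.Icc 0 z) :=
    fun x hx => (hd x hx.1).continuousAt.continuousWithinAt
  have hmono : StrictMonoOn (fun x : ℝ => u * (4 * x / (1 + x) ^ 2)) (Set.Icc 0 z) := by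
    refine strictMonoOn_of_deriv_pos (convex_Icc 0 z) hcont ?_
    intro x hx
    rw [interior_Icc] at hx
    rw [(hd x hx.1.le).deriv]
    have h1 : 0 < 1 - x := by linarith [hx.2]
    have h2 : 0 < 1 + x := by linarith [hx.1]
    positivity
  have f0 : u * (4 * 0 / (1 + 0) ^ 2) = 0 := by simp
  have fz : u * (4 * z / (1 + z) ^ 2) = 1 := by
    rw [hu]; field_simp
  refine ⟨Set.Subset.antisymm ?_ ?_, (hmono.mono Set.Ioo_subset_Icc_self).injOn⟩
  · rintro _ ⟨x, hx, rfl⟩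
    have hx' : x ∈ Set.Icc 0 z := Set.Ioo_subset_Icc_self hx
    constructor
    · have := hmono (Set.left_mem_Icc.2 hz0.le) hx' hx.1
      simpa only [f0] using this
    · have := hmono hx' (Set.right_mem_Icc.2 hz0.le) hx.2
      simpa only [fz] using this
  · have := intermediate_value_Ioo hz0.le hcont
    simpa only [f0, fz] using this

/-- Fiberwise period integral of the non-isotrivial fibration, evaluated as a
Gauss hypergeometric function. -/
theorem statement18 (β₁ β₂ z u : ℝ)
    (hβ₁ : 0 < β₁) (hβ₂ : β₂ < 1) (hβ : 1 / 2 < β₁ + β₂)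
    (hz0 : 0 < z) (hz1 : z < 1) (hu : u = (1 + z) ^ 2 / (4 * z)) :
    ∫ x in Set.Ioo 0 z,
        x ^ (β₁ + β₂ - 3 / 2) * (x ^ 2 + 2 * (1 - 2 * u) * x + 1) ^ (-β₂) =
      Real.Gamma (β₁ + β₂ - 1 / 2) * Real.Gamma (1 - β₂) / Real.Gamma (β₁ + 1 / 2) *
      (4 * u) ^ (-(β₁ + β₂ - 1 / 2)) *
      hyp2F1 (β₁ + β₂ - 1 / 2) β₁ (2 * β₁) (1 / u) := by
  have hu1 : 1 < u := by
    rw [hu, lt_div_iff₀ (by positivity)]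
    nlinarith [mul_pos (sub_pos.2 hz1) (sub_pos.2 hz1)]
  have hu0 : 0 < u := by linarith
  obtain ⟨himg, hinj⟩ := subst_image hz0 hz1 hu
  have hJ := J_eval (a := β₁ + β₂ - 1 / 2) (b := β₁) (c := 1 - β₂) (u := u) (by linarith) hβ₁
    (by linarith) (by ring) hu1
  have hsub := integral_image_eq_integral_abs_deriv_smul (s := Set.Ioo 0 z) measurableSet_Ioo
    (fun x hx => ((wx_deriv (show 0 < 1 + x by linarith [hx.1])).const_mul u).hasDerivWithinAt)
    hinj (fun s => s ^ (β₁ + β₂ - 1 / 2 - 1) * (1 - s) ^ (1 - β₂ - 1) * S0 β₁ (s / u))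
  rw [himg, hJ] at hsub
  rw [mul_right_comm, hsub, ← integral_mul_const]
  refine setIntegral_congr_fun measurableSet_Ioo fun x hx => ?_
  have hx0 : 0 < x := hx.1
  have hx1 : x < 1 := hx.2.trans hz1
  have hp : 0 < 1 + x := by linarith
  have hm : 0 < 1 - x := by linarith
  have hlt : u * (4 * x / (1 + x) ^ 2) < 1 := by
    have : u * (4 * x / (1 + x) ^ 2) ∈ Set.Ioo (0 : ℝ) 1 := himg ▸ ⟨x, hx, rfl⟩
    exact this.2
  simp only [smul_eq_mul]
  rw [mul_div_cancel_left₀ _ hu0.ne', S0_eval hβ₁ hx0 hx1, abs_of_pos (by positivity)]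
  have hQ : x ^ 2 + 2 * (1 - 2 * u) * x + 1 = (1 + x) ^ 2 * (1 - u * (4 * x / (1 + x) ^ 2)) := by
    field_simp
    ring
  have hR : 0 < 1 - u * (4 * x / (1 + x) ^ 2) := by linarith
  rw [hQ, Real.mul_rpow (by positivity) hR.le]
  generalize (1 - u * (4 * x / (1 + x) ^ 2)) = R at *
  rw [show 1 - β₂ - 1 = -β₂ by ring, show β₁ + β₂ - 1 / 2 - 1 = β₁ + β₂ - 3 / 2 by ring]
  have g1 : u * (4 * x / (1 + x) ^ 2) = (4 * u) * x / (1 + x) ^ 2 := by ring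
  have g2 : ∀ t : ℝ, ((1 + x) ^ 2) ^ t = (1 + x) ^ (2 * t) := fun t => by
    rw [← Real.rpow_natCast, ← Real.rpow_mul hp.le]; norm_num
  rw [g1, Real.div_rpow (by positivity) (by positivity), Real.mul_rpow (by positivity) hx0.le,
    g2, g2, show -(β₁ + β₂ - 1 / 2) = -(β₁ + β₂ - 3 / 2) - 1 by ring,
    Real.rpow_sub_one (by positivity), Real.rpow_neg (by positivity : (0 : ℝ) ≤ 4 * u)]
  have g3 : (1 + x) ^ (2 * β₁) = (1 + x) ^ (2 * (β₁ + β₂ - 3 / 2)) * (1 + x) ^ (2 * -β₂) *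
      (1 + x) ^ 3 := by
    rw [← Real.rpow_natCast, ← Real.rpow_add hp, ← Real.rpow_add hp]
    congr 1
    push_cast
    ring
  rw [g3]
  have k1 := (Real.rpow_pos_of_pos hp (2 * (β₁ + β₂ - 3 / 2))).ne'
  have k2 := (Real.rpow_pos_of_pos (show 0 < 4 * u by positivity) (β₁ + β₂ - 3 / 2)).ne'
  generalize (1 + x) ^ (2 * (β₁ + β₂ - 3 / 2)) = A at *
  generalize (4 * u) ^ (β₁ + β₂ - 3 / 2) = B at *
  generalize (1 + x) ^ (2 * -β₂) = C at *
  generalize x ^ (β₁ + β₂ - 3 / 2) = D at *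
  generalize R ^ (-β₂) = E at *
  have := hm.ne'
  field_simp
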